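/- arXiv:0909.5199 — 2 statements merged into one kernel-verified Lean document; each statement's English description precedes it below -/
import Mathlib

section
/- Let s = s_1 s_2 s_3 … be any infinite sequence with each s_i ∈ {min, max}. For a permutation π of [n], define the statistic m_s(π) as the length k of the subsequence π_{i_1} π_{i_2} ⋯ π_{i_k} where π_{i_1} = s_1(π_1 π_2 ⋯ π_n), and for each j ≥ 2, π_{i_j} = s_j(π_{i_{j-1}+1} π_{i_{j-1}+2} ⋯ π_n), the process stopping at the first k with i_k = n. Then for all n ≥ 1 and k ≥ 1, the number of permutations π of [n] with m_s(π) = k equals the signless Stirling number of the first kind c(n,k). -/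
open Equiv Finset

/-- `π` is an up-down permutation of `[n]` in one-line notation (0-indexed):
`π 0 < π 1 > π 2 < π 3 > ⋯`. -/
def IsUpDownPerm {n : ℕ} (π : Equiv.Perm (Fin n)) : Prop :=
  ∀ i j : Fin n, (j : ℕ) = (i : ℕ) + 1 →
    (((i : ℕ) % 2 = 0 → π i < π j) ∧ ((i : ℕ) % 2 = 1 → π j < π i))

/-- The Euler number `E n`: the number of up-down permutations of `[n]`. -/
noncomputable def eulerE (n : ℕ) : ℕ :=
  Nat.card {π : Equiv.Perm (Fin n) // IsUpDownPerm π}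

/-- The length of the cycle of `π` containing `x` (fixed points give length `1`). -/
noncomputable def cycLen {n : ℕ} (π : Equiv.Perm (Fin n)) (x : Fin n) : ℕ :=
  Function.minimalPeriod (⇑π) x

/-- `x` is the smallest element of its cycle of `π`. -/
def IsOrbitMin {n : ℕ} (π : Equiv.Perm (Fin n)) (x : Fin n) : Prop :=
  ∀ k : ℕ, x ≤ (π ^ k) x

/-- The cyclic representation `x, π x, π² x, …` (of length `cycLen π x`) of the
cycle of `π` containing `x` has the up-down pattern `x < π x > π² x < ⋯`. -/
def CycleUpDownAt {n : ℕ} (π : Equiv.Perm (Fin n)) (x : Fin n) : Prop :=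
  ∀ i : ℕ, i + 1 < cycLen π x →
    ((i % 2 = 0 → (π ^ i) x < (π ^ (i + 1)) x) ∧
     (i % 2 = 1 → (π ^ (i + 1)) x < (π ^ i) x))

/-- `π` is cycle-up-down: every cycle, written in standard form
(starting at its smallest element), is up-down. -/
def IsCUD {n : ℕ} (π : Equiv.Perm (Fin n)) : Prop :=
  ∀ x : Fin n, IsOrbitMin π x → CycleUpDownAt π x

/-- The number of cycles of `π` (fixed points included), counted via the
smallest elements of the cycles. -/
noncomputable def cycleCount {n : ℕ} (π : Equiv.Perm (Fin n)) : ℕ :=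
  Nat.card {x : Fin n // IsOrbitMin π x}

/-- The number of cycles of `π` of even length. -/
noncomputable def evenCycleCount {n : ℕ} (π : Equiv.Perm (Fin n)) : ℕ :=
  Nat.card {x : Fin n // IsOrbitMin π x ∧ Even (cycLen π x)}

/-- The number of cycles of `π` of odd length. -/
noncomputable def oddCycleCount {n : ℕ} (π : Equiv.Perm (Fin n)) : ℕ :=
  Nat.card {x : Fin n // IsOrbitMin π x ∧ Odd (cycLen π x)}

/-- The number of excedances of `π`. -/
noncomputable def excCount {n : ℕ} (π : Equiv.Perm (Fin n)) : ℕ :=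
  Nat.card {i : Fin n // i < π i}

/-- The number of left-to-right minima of `π` (in one-line notation). -/
noncomputable def lrmCount {n : ℕ} (π : Equiv.Perm (Fin n)) : ℕ :=
  Nat.card {i : Fin n // ∀ j : Fin n, j < i → π i < π j}

/-- The number of extreme elements of `π`: entries in position `≥ 2`
(0-indexed: position `≥ 1`) that are left-to-right minima or maxima. -/
noncomputable def extrCount {n : ℕ} (π : Equiv.Perm (Fin n)) : ℕ :=
  Nat.card {i : Fin n // (i : ℕ) ≠ 0 ∧
    ((∀ j : Fin n, j < i → π i < π j) ∨ (∀ j : Fin n, j < i → π j < π i))}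

/-- Auxiliary (fuel-based) computation of the length of the `s`-driven
min/max subsequence of a list: at step `j` (0-indexed) pick the minimum of the
remaining list if `s j = true`, its maximum if `s j = false`, and continue with
the part of the list strictly to the right of the picked entry. -/
def msLenAux : ℕ → (ℕ → Bool) → List ℕ → ℕ
  | 0, _, _ => 0
  | _, _, [] => 0
  | fuel + 1, s, a :: t =>
      let l := a :: t
      let v := if s 0 then l.foldr min a else l.foldr max a
      1 + msLenAux fuel (fun i => s (i + 1)) ((l.dropWhile (· != v)).tail)

/-- The length of the `s`-driven min/max subsequence of a list
(`s j = true` means minimum at step `j`, `s j = false` means maximum). -/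
def msLen (s : ℕ → Bool) (l : List ℕ) : ℕ := msLenAux l.length s l

/-- The one-line notation of `π` as a list of natural numbers. -/
def oneLine {n : ℕ} (π : Equiv.Perm (Fin n)) : List ℕ :=
  List.ofFn fun i => ((π i : ℕ))

/-- The statistic `m_s(π)`: the length of the `s`-driven min/max subsequence
of the one-line notation of `π`. -/
def msStat {n : ℕ} (s : ℕ → Bool) (π : Equiv.Perm (Fin n)) : ℕ :=
  msLen s (oneLine π)

/-- `st π`: the length of the min-max sequence of `π` (alternately take the
minimum, the maximum, the minimum, … of what remains to the right). -/
def stStat {n : ℕ} (π : Equiv.Perm (Fin n)) : ℕ :=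
  msStat (fun i => i % 2 == 0) π

/-- `π` is a cyclic permutation: it consists of a single cycle. -/
def IsCyclicPerm {n : ℕ} (π : Equiv.Perm (Fin n)) : Prop :=
  ∀ x y : Fin n, π.SameCycle x y

/-- The number of up-down cycles of `π` having length `k`. -/
noncomputable def udLenCount {n : ℕ} (π : Equiv.Perm (Fin n)) (k : ℕ) : ℕ :=
  Nat.card {x : Fin n // IsOrbitMin π x ∧ cycLen π x = k ∧ CycleUpDownAt π x}

/-- `ud π`: the number of up-down cycles of `π`. -/
noncomputable def udCount {n : ℕ} (π : Equiv.Perm (Fin n)) : ℕ :=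
  Nat.card {x : Fin n // IsOrbitMin π x ∧ CycleUpDownAt π x}

/-- `r n`: the number of permutations of `[n]` having no up-down cycles. -/
noncomputable def noUDCyclesCount (n : ℕ) : ℕ :=
  Nat.card {π : Equiv.Perm (Fin n) // ∀ x : Fin n, IsOrbitMin π x → ¬ CycleUpDownAt π x}

/-!
Both statistics have generating polynomial `X (X + 1) ⋯ (X + n - 1)`, because each behaves simply
when a suitable entry is deleted.

For `m_s`, delete the first entry of the one-line notation. If it is the extremum requested by `s₁`,
it is picked and the remaining word is processed with the shifted sequence `s₂ s₃ …`; otherwise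
it is skipped and plays no further role. Exactly one of the possible first entries is picked, and
the inductive hypothesis, which covers every sequence `s`, applies to the rest.

For the number of cycles, delete the largest element from its cycle: this removes a cycle
if that element is a fixed point, and otherwise changes no cycle minimum.
-/

open Polynomial

section Extremum

variable {α : Type*}

/-- `v` is the minimum (`b = true`) or the maximum (`b = false`) of the set `A`, as requested by
one term `b` of a min/max sequence. -/
def IsExtremum [LE α] (b : Bool) (A : Set α) (v : α) : Prop :=
  if b then IsLeast A v else IsGreatest A v

namespace IsExtremum

variable {b : Bool} {A B : Set α} {v w : α}

theorem mem [LE α] (h : IsExtremum b A v) : v ∈ A := by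
  cases b
  exacts [And.left h, And.left h]

theorem unique [PartialOrder α] (hv : IsExtremum b A v) (hw : IsExtremum b A w) : v = w := by
  cases b
  exacts [IsGreatest.unique hv hw, IsLeast.unique hv hw]

theorem of_subset [Preorder α] (h : IsExtremum b A v) (hBA : B ⊆ A) (hv : v ∈ B) :
    IsExtremum b B v := by
  cases b
  exacts [⟨hv, upperBounds_mono_set hBA (And.right h)⟩,
    ⟨hv, lowerBounds_mono_set hBA (And.right h)⟩]

end IsExtremum

variable [LinearOrder α]

theorem exists_isExtremum_range {ι : Type*} [Finite ι] [Nonempty ι] (b : Bool) (f : ι → α) :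
    ∃ i, IsExtremum b (Set.range f) (f i) := by
  cases b
  · obtain ⟨i, hi⟩ := Finite.exists_max f
    exact ⟨i, Set.mem_range_self i, Set.forall_mem_range.2 hi⟩
  · obtain ⟨i, hi⟩ := Finite.exists_min f
    exact ⟨i, Set.mem_range_self i, Set.forall_mem_range.2 hi⟩

theorem isLeast_foldr_min (a : α) (l : List α) : IsLeast {x | x ∈ a :: l} (l.foldr min a) := by
  induction l with
  | nil => simp
  | cons b l ih =>
    have hset : {x | x ∈ a :: b :: l} = insert b {x | x ∈ a :: l} := by
      ext x
      simp [or_left_comm]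
    rw [hset]
    exact ih.insert b

theorem isGreatest_foldr_max (a : α) (l : List α) :
    IsGreatest {x | x ∈ a :: l} (l.foldr max a) :=
  isLeast_foldr_min (α := αᵒᵈ) a l

/-- The minimum (`b = true`) or maximum (`b = false`) of the list `a :: l`, in the form
in which `msLenAux` computes it. -/
def listExtremum (b : Bool) (a : α) (l : List α) : α :=
  if b then (a :: l).foldr min a else (a :: l).foldr max a

theorem isExtremum_listExtremum (b : Bool) (a : α) (l : List α) :
    IsExtremum b {x | x ∈ a :: l} (listExtremum b a l) := by
  have hset : {x | x ∈ a :: l} = {x | x ∈ a :: a :: l} := by simp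
  rw [hset]
  cases b
  exacts [isGreatest_foldr_max a (a :: l), isLeast_foldr_min a (a :: l)]

end Extremum

section MinMaxSubsequence

theorem msLenAux_succ_cons (fuel : ℕ) (s : ℕ → Bool) (a : ℕ) (t : List ℕ) :
    msLenAux (fuel + 1) s (a :: t) =
      1 + msLenAux fuel (fun i => s (i + 1))
        (((a :: t).dropWhile (· != listExtremum (s 0) a t)).tail) :=
  rfl

theorem length_tail_dropWhile_cons_le {α : Type*} (p : α → Bool) (a : α) (t : List α) :
    ((a :: t).dropWhile p).tail.length ≤ t.length := by
  have := (List.dropWhile_sublist (l := a :: t) p).length_le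
  simp only [List.length_tail, List.length_cons] at *
  omega

theorem msLenAux_eq_msLen {fuel : ℕ} {s : ℕ → Bool} {l : List ℕ} (hl : l.length ≤ fuel) :
    msLenAux fuel s l = msLen s l := by
  induction fuel using Nat.strong_induction_on generalizing s l with
  | _ fuel ih =>
    match fuel, l with
    | 0, [] | _ + 1, [] => rfl
    | fuel + 1, a :: t =>
      have ht : t.length ≤ fuel := Nat.le_of_succ_le_succ hl
      have hrest := length_tail_dropWhile_cons_le (· != listExtremum (s 0) a t) a t
      rw [msLen, List.length_cons, msLenAux_succ_cons, msLenAux_succ_cons,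
        ih fuel (by omega) (hrest.trans ht), ih t.length (by omega) hrest]

theorem msLen_cons (s : ℕ → Bool) (a : ℕ) (t : List ℕ) :
    msLen s (a :: t) = 1 + msLen (fun i => s (i + 1))
      (((a :: t).dropWhile (· != listExtremum (s 0) a t)).tail) := by
  rw [msLen, List.length_cons, msLenAux_succ_cons,
    msLenAux_eq_msLen (length_tail_dropWhile_cons_le _ a t)]

variable {s : ℕ → Bool} {a : ℕ} {t : List ℕ}

theorem msLen_cons_of_isExtremum (h : IsExtremum (s 0) {x | x ∈ a :: t} a) :
    msLen s (a :: t) = msLen (fun i => s (i + 1)) t + 1 := by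
  rw [msLen_cons, (isExtremum_listExtremum (s 0) a t).unique h]
  simp [add_comm]

theorem msLen_cons_of_not_isExtremum (h : ¬ IsExtremum (s 0) {x | x ∈ a :: t} a) :
    msLen s (a :: t) = msLen s t := by
  have hv := isExtremum_listExtremum (s 0) a t
  have hne : a ≠ listExtremum (s 0) a t := fun heq => h (by rwa [← heq] at hv)
  have hmem : listExtremum (s 0) a t ∈ t := List.mem_of_ne_of_mem hne.symm hv.mem
  match t with
  | b :: t =>
    have hsame : listExtremum (s 0) a (b :: t) = listExtremum (s 0) b t :=
      (hv.of_subset (fun x hx => List.mem_cons_of_mem a hx) hmem).unique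
        (isExtremum_listExtremum (s 0) b t)
    rw [msLen_cons, List.dropWhile_cons_of_pos (by simpa using hne), hsame, ← msLen_cons]

variable {n : ℕ}

theorem setOf_mem_cons_ofFn {α : Type*} (g : Fin (n + 1) → α) :
    {x | x ∈ g 0 :: List.ofFn fun i : Fin n => g i.succ} = Set.range g := by
  ext x
  simp [← List.ofFn_succ, List.mem_ofFn]

theorem msLen_ofFn_of_isExtremum {g : Fin (n + 1) → ℕ}
    (h : IsExtremum (s 0) (Set.range g) (g 0)) :
    msLen s (List.ofFn g) = msLen (fun i => s (i + 1)) (List.ofFn fun i => g i.succ) + 1 := by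
  rw [List.ofFn_succ, msLen_cons_of_isExtremum (by rwa [setOf_mem_cons_ofFn])]

theorem msLen_ofFn_of_not_isExtremum {g : Fin (n + 1) → ℕ}
    (h : ¬ IsExtremum (s 0) (Set.range g) (g 0)) :
    msLen s (List.ofFn g) = msLen s (List.ofFn fun i => g i.succ) := by
  rw [List.ofFn_succ, msLen_cons_of_not_isExtremum (by rwa [setOf_mem_cons_ofFn])]

theorem msLen_ofFn_decomposeFin_symm {f : Fin (n + 1) → ℕ} (hf : Function.Injective f)
    {p₀ : Fin (n + 1)} (hp₀ : IsExtremum (s 0) (Set.range f) (f p₀))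
    (p : Fin (n + 1)) (e : Perm (Fin n)) :
    msLen s (List.ofFn fun i => f (Perm.decomposeFin.symm (p, e) i)) =
      if p = p₀ then msLen (fun i => s (i + 1)) (List.ofFn fun i => f (swap 0 p (e i).succ)) + 1
      else msLen s (List.ofFn fun i => f (swap 0 p (e i).succ)) := by
  have hrange : Set.range (fun i => f (Perm.decomposeFin.symm (p, e) i)) = Set.range f :=
    EquivLike.range_comp f (Perm.decomposeFin.symm (p, e))
  split_ifs with hp
  · rw [msLen_ofFn_of_isExtremum (by rwa [hrange, Perm.decomposeFin_symm_apply_zero, hp])]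
    simp
  · rw [msLen_ofFn_of_not_isExtremum]
    · simp
    · rw [hrange, Perm.decomposeFin_symm_apply_zero]
      exact fun h => hp (hf (h.unique hp₀))

end MinMaxSubsequence

section DeleteElement

variable {α β : Type*}

theorem apply_eq_of_sameCycle {f : Perm α} {φ : α → β} (hφ : ∀ x, φ (f x) = φ x) {x y : α}
    (h : f.SameCycle x y) : φ x = φ y := by
  obtain ⟨i, rfl⟩ := h
  induction i with
  | zero => rfl
  | succ i ih => rw [ih, add_comm, zpow_one_add, Perm.mul_apply, hφ]
  | pred i ih => rw [ih, ← hφ ((f ^ (-(i : ℤ) - 1)) x), ← Perm.mul_apply, ← zpow_one_add,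
      add_sub_cancel]

theorem sameCycle_permCongr_iff (e : α ≃ β) (f : Perm α) {x y : α} :
    Perm.SameCycle (e.permCongr f) (e x) (e y) ↔ f.SameCycle x y := by
  simp only [Perm.SameCycle, ← permCongrHom_coe, ← map_zpow]
  simp

theorem some_removeNone (π : Perm (Option α)) (x : α) :
    some (removeNone π x) = (π (some x)).or (π none) := by
  cases h : π (some x) with
  | none => simpa using removeNone_none π h
  | some y => simpa [h] using removeNone_some π ⟨y, h⟩

theorem sameCycle_some_apply_removeNone (π : Perm (Option α)) (x : α) :
    π.SameCycle (some (removeNone π x)) (some x) := by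
  cases h : π (some x) with
  | none => rw [removeNone_none π h, Perm.sameCycle_apply_left, ← h, Perm.sameCycle_apply_left]
  | some y => rw [removeNone_some π ⟨y, h⟩, Perm.sameCycle_apply_left]

theorem sameCycle_removeNone_iff (π : Perm (Option α)) {x y : α} :
    Perm.SameCycle (removeNone π) x y ↔ π.SameCycle (some x) (some y) := by
  constructor <;> intro h
  · let toCycle (z : α) : Quotient (Perm.SameCycle.setoid π) := ⟦some z⟧
    exact Quotient.exact <| apply_eq_of_sameCycle (φ := toCycle)
      (fun z => Quotient.sound (sameCycle_some_apply_removeNone π z)) h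
  · -- Sending `none` to the cycle of its successor `π none` makes this map `π`-invariant.
    let toCycle (z : Option α) : Option (Quotient (Perm.SameCycle.setoid (removeNone π))) :=
      (z.or (π none)).map (⟦·⟧)
    have toCycle_apply : ∀ z, toCycle (π z) = toCycle z
      | none => by simp [toCycle]
      | some z => by
        simp only [toCycle, ← some_removeNone, Option.some_or, Option.map_some]
        exact congrArg some (Quotient.sound (Perm.sameCycle_apply_left.2 .rfl))
    exact Quotient.exact (Option.some_injective _ (apply_eq_of_sameCycle toCycle_apply h))

end DeleteElement

section CycleCount

variable {n : ℕ}

theorem isOrbitMin_iff_forall_sameCycle {π : Perm (Fin n)} {x : Fin n} :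
    IsOrbitMin π x ↔ ∀ y, π.SameCycle x y → x ≤ y := by
  constructor
  · intro h y hxy
    obtain ⟨k, rfl⟩ := hxy.exists_nat_pow_eq
    exact h k
  · exact fun h k => h _ (Perm.sameCycle_pow_right.2 .rfl)

/-- Deletes the largest element from its cycle: `π` is encoded by the image of `Fin.last n`
(`none` if it is fixed) and the permutation induced on the remaining elements. -/
def decomposeLast (n : ℕ) : Perm (Fin (n + 1)) ≃ Option (Fin n) × Perm (Fin n) :=
  finSuccEquivLast.permCongr.trans Perm.decomposeOption

theorem decomposeLast_fst_eq_none_iff {π : Perm (Fin (n + 1))} :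
    (decomposeLast n π).1 = none ↔ π (Fin.last n) = Fin.last n := by
  simp [decomposeLast, permCongr_apply, ← eq_symm_apply]

theorem sameCycle_decomposeLast_snd_iff {π : Perm (Fin (n + 1))} {x y : Fin n} :
    (decomposeLast n π).2.SameCycle x y ↔ π.SameCycle x.castSucc y.castSucc := by
  rw [← sameCycle_permCongr_iff finSuccEquivLast, finSuccEquivLast_castSucc,
    finSuccEquivLast_castSucc, ← sameCycle_removeNone_iff]
  rfl

theorem isOrbitMin_castSucc_iff {π : Perm (Fin (n + 1))} {x : Fin n} :
    IsOrbitMin π x.castSucc ↔ IsOrbitMin (decomposeLast n π).2 x := by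
  simp [isOrbitMin_iff_forall_sameCycle, Fin.forall_fin_succ', sameCycle_decomposeLast_snd_iff,
    Fin.le_last]

theorem isOrbitMin_last_iff {π : Perm (Fin (n + 1))} :
    IsOrbitMin π (Fin.last n) ↔ (decomposeLast n π).1 = none := by
  rw [decomposeLast_fst_eq_none_iff]
  constructor
  · exact fun h => Fin.last_le_iff.1 (h 1)
  · exact fun h k => (Perm.pow_apply_eq_self_of_apply_eq_self h k).ge

theorem cycleCount_succ (π : Perm (Fin (n + 1))) :
    cycleCount π =
      cycleCount (decomposeLast n π).2 + if (decomposeLast n π).1 = none then 1 else 0 := by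
  classical
  simp only [cycleCount, Nat.card_eq_fintype_card, Fintype.card_subtype, Finset.card_filter,
    Fin.sum_univ_castSucc, isOrbitMin_castSucc_iff, isOrbitMin_last_iff]

end CycleCount

section GeneratingPolynomial

theorem card_fiber_eq_coeff_sum_X_pow {α : Type*} [Fintype α] (g : α → ℕ) (k : ℕ) :
    Nat.card {a : α // g a = k} = (∑ a, (X : ℕ[X]) ^ g a).coeff k := by
  classical
  simp [Fintype.card_subtype, finsetSum_coeff, coeff_X_pow, eq_comm]

theorem sum_ite_mul_eq_mul_add {ι R : Type*} [Fintype ι] [DecidableEq ι] [Semiring R] {n : ℕ}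
    (hι : Fintype.card ι = n + 1) (i₀ : ι) (a b : R) :
    ∑ i, (if i = i₀ then a * b else a) = a * (b + n) := by
  have hrest : ∑ i ∈ {i₀}ᶜ, (if i = i₀ then a * b else a) = a * n := by
    rw [Finset.sum_congr rfl fun i hi => if_neg (by simpa using hi)]
    simp [Finset.card_compl, hι, (Nat.cast_commute n a).eq]
  rw [Fintype.sum_eq_add_sum_compl i₀, if_pos rfl, hrest, mul_add]

theorem sum_X_pow_msLen_comp_perm {n : ℕ} (s : ℕ → Bool) {f : Fin n → ℕ}
    (hf : Function.Injective f) :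
    ∑ π : Perm (Fin n), (X : ℕ[X]) ^ msLen s (List.ofFn fun i => f (π i)) =
      ascPochhammer ℕ n := by
  induction n generalizing s with
  | zero => simp [msLen, msLenAux]
  | succ n ih =>
    obtain ⟨p₀, hp₀⟩ := exists_isExtremum_range (s 0) f
    have sum_of_first_entry (p : Fin (n + 1)) :
        ∑ e : Perm (Fin n),
          (X : ℕ[X]) ^ msLen s (List.ofFn fun i => f (Perm.decomposeFin.symm (p, e) i)) =
          if p = p₀ then ascPochhammer ℕ n * X else ascPochhammer ℕ n := by
      have hrest : Function.Injective fun i : Fin n => f (swap 0 p i.succ) :=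
        hf.comp ((swap 0 p).injective.comp (Fin.succ_injective n))
      simp only [msLen_ofFn_decomposeFin_symm hf hp₀]
      split_ifs
      · simp only [pow_succ, ← Finset.sum_mul, ih _ hrest]
      · exact ih s hrest
    calc ∑ π : Perm (Fin (n + 1)), (X : ℕ[X]) ^ msLen s (List.ofFn fun i => f (π i))
        = ∑ p, ∑ e, X ^ msLen s (List.ofFn fun i => f (Perm.decomposeFin.symm (p, e) i)) := by
          rw [← Perm.decomposeFin.symm.sum_comp, Fintype.sum_prod_type]
      _ = ∑ p, if p = p₀ then ascPochhammer ℕ n * X else ascPochhammer ℕ n :=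
          Fintype.sum_congr _ _ sum_of_first_entry
      _ = ascPochhammer ℕ (n + 1) := by
          rw [sum_ite_mul_eq_mul_add (Fintype.card_fin _), ascPochhammer_succ_right]

theorem sum_X_pow_cycleCount (n : ℕ) :
    ∑ π : Perm (Fin n), (X : ℕ[X]) ^ cycleCount π = ascPochhammer ℕ n := by
  induction n with
  | zero => simp [cycleCount]
  | succ n ih =>
    have sum_of_image_last (p : Option (Fin n)) :
        ∑ e : Perm (Fin n), (X : ℕ[X]) ^ (cycleCount e + if p = none then 1 else 0) =
          if p = none then ascPochhammer ℕ n * X else ascPochhammer ℕ n := by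
      split_ifs
      · simp only [pow_succ, ← Finset.sum_mul, ih]
      · exact ih
    calc ∑ π : Perm (Fin (n + 1)), (X : ℕ[X]) ^ cycleCount π
        = ∑ p, ∑ e, X ^ (cycleCount e + if p = none then 1 else 0) := by
          simp only [cycleCount_succ]
          rw [(decomposeLast n).sum_comp
            fun q => (X : ℕ[X]) ^ (cycleCount q.2 + if q.1 = none then 1 else 0),
            Fintype.sum_prod_type]
      _ = ∑ p, if p = none then ascPochhammer ℕ n * X else ascPochhammer ℕ n :=
          Fintype.sum_congr _ _ sum_of_image_last
      _ = ascPochhammer ℕ (n + 1) := by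
          rw [sum_ite_mul_eq_mul_add (n := n) (by simp), ascPochhammer_succ_right]

end GeneratingPolynomial

/-- for any min/max sequence `s` (`true` = min, `false` = max),
`m_s` is distributed like the number of cycles (Stirling numbers). -/
theorem stmt15 (s : ℕ → Bool) (n k : ℕ) (hn : 1 ≤ n) (hk : 1 ≤ k) :
    Nat.card {π : Equiv.Perm (Fin n) // msStat s π = k} =
      Nat.card {π : Equiv.Perm (Fin n) // cycleCount π = k} := by
  rw [card_fiber_eq_coeff_sum_X_pow, card_fiber_eq_coeff_sum_X_pow, sum_X_pow_cycleCount]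
  exact congrArg (coeff · k) (sum_X_pow_msLen_comp_perm s Fin.val_injective)
end

section
/- For every n ≥ 1, the sum over all permutations π of [n] of ud(π), the number of up-down cycles of π, equals n! · (E_0/1! + E_1/2! + ⋯ + E_{n-1}/n!); equivalently, the expected number of up-down cycles in a uniformly random permutation of [n] is Σ_{k=1}^{n} E_{k-1}/k!. -/
open Equiv Finset

/-!
An up-down cycle of length `m + 1` is a word `f 0, …, f m` of distinct elements which starts with
its minimum and is up-down. Double count the pairs of a permutation and an up-down cycle of it.
A word is an arrangement of an `(m + 1)`-element set, so there are `n.choose (m + 1) * E m` of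
them: after its minimum the word goes on with a down-up arrangement of the other `m` elements, and
reversing the order turns it into an up-down one. A given word is a cycle of `(n - (m + 1))!`
permutations, which are free outside the word. Thus cycles of length `m + 1` contribute
`n! * E m / (m + 1)!`.
-/

open Function

section UpDownWords

variable {α β : Type*} {k m : ℕ}

/-- The word `f 0, f 1, …` is up-down: `f 0 < f 1 > f 2 < ⋯`. For permutations of `Fin k` this is
`IsUpDownPerm` by definition. -/
def IsUpDown [LT α] (f : Fin k → α) : Prop :=
  ∀ i j : Fin k, (j : ℕ) = (i : ℕ) + 1 →
    (((i : ℕ) % 2 = 0 → f i < f j) ∧ ((i : ℕ) % 2 = 1 → f j < f i))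

/-- The word `f 0, …, f m` is up-down and starts with its minimum, as does the standard form of an
up-down cycle. -/
def IsStandardUpDown [Preorder α] (f : Fin (m + 1) → α) : Prop :=
  (∀ i, f 0 ≤ f i) ∧ IsUpDown f

theorem isUpDown_strictMono_comp_iff [LinearOrder α] [Preorder β] {g : α → β} (hg : StrictMono g)
    {f : Fin k → α} : IsUpDown (g ∘ f) ↔ IsUpDown f := by
  simp only [IsUpDown, comp_apply, hg.lt_iff_lt]

theorem isStandardUpDown_strictMono_comp_iff [LinearOrder α] [Preorder β] {g : α → β}
    (hg : StrictMono g) {f : Fin (m + 1) → α} :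
    IsStandardUpDown (g ∘ f) ↔ IsStandardUpDown f := by
  simp only [IsStandardUpDown, isUpDown_strictMono_comp_iff hg, comp_apply, hg.le_iff_le]

theorem isUpDown_iff_toDual_comp_tail [LT α] {f : Fin (m + 1) → α} (hf : ∀ i, f 0 < Fin.tail f i) :
    IsUpDown f ↔ IsUpDown (OrderDual.toDual ∘ Fin.tail f) := by
  have parity (i : ℕ) : ((i + 1) % 2 = 0 ↔ i % 2 = 1) ∧ ((i + 1) % 2 = 1 ↔ i % 2 = 0) := by omega
  simp only [Fin.tail] at hf
  simp only [IsUpDown, Fin.forall_fin_succ (n := m), Fin.tail, comp_apply,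
    OrderDual.toDual_lt_toDual, Fin.val_succ, Fin.val_zero, parity]
  simp [hf, and_comm]

end UpDownWords

section StandardUpDownPerm

variable {m : ℕ}

/-- The permutation with one-line notation `0, m - e 0, m - e 1, …, m - e (m - 1)`: the complement
of `e`, preceded by a new minimum. -/
def zeroConsRev (e : Perm (Fin m)) : Perm (Fin (m + 1)) :=
  Perm.decomposeFin.symm (0, e.trans Fin.revPerm)

theorem zeroConsRev_apply_zero (e : Perm (Fin m)) : zeroConsRev e 0 = 0 := by
  simp [zeroConsRev]

theorem tail_zeroConsRev (e : Perm (Fin m)) :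
    Fin.tail (zeroConsRev e) = Fin.succ ∘ Fin.rev ∘ e := by
  ext i
  simp [Fin.tail, zeroConsRev]

theorem zeroConsRev_injective : Injective (zeroConsRev (m := m)) := by
  intro e₁ e₂ h
  have h' := (Prod.ext_iff.1 (Perm.decomposeFin.symm.injective h)).2
  exact Equiv.ext fun i => Fin.rev_injective (DFunLike.congr_fun h' i)

theorem range_zeroConsRev : Set.range (zeroConsRev (m := m)) = {τ | τ 0 = 0} := by
  refine Set.Subset.antisymm (Set.range_subset_iff.2 zeroConsRev_apply_zero) fun τ hτ => ?_
  obtain ⟨⟨p, e⟩, rfl⟩ := Perm.decomposeFin.symm.surjective τ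
  obtain rfl : p = 0 := by simpa using hτ
  refine ⟨e.trans Fin.revPerm, congrArg (fun e' => Perm.decomposeFin.symm (0, e')) ?_⟩
  ext i
  simp

theorem isUpDown_zeroConsRev_iff {e : Perm (Fin m)} :
    IsUpDown (zeroConsRev e) ↔ IsUpDownPerm e := by
  have anti : StrictAnti (Fin.succ ∘ Fin.rev : Fin m → Fin (m + 1)) :=
    (Fin.strictMono_succ (n := m)).comp_strictAnti Fin.rev_strictAnti
  rw [isUpDown_iff_toDual_comp_tail (by simp [zeroConsRev_apply_zero, tail_zeroConsRev]),
    tail_zeroConsRev]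
  exact isUpDown_strictMono_comp_iff anti.dual_right

theorem setOf_isStandardUpDown_perm :
    {τ : Perm (Fin (m + 1)) | IsStandardUpDown τ} = zeroConsRev '' {e | IsUpDownPerm e} := by
  have starts_with_min_iff (τ : Perm (Fin (m + 1))) :
      (∀ i, τ 0 ≤ τ i) ↔ τ ∈ Set.range zeroConsRev := by
    rw [range_zeroConsRev, Set.mem_ofPred_eq]
    exact ⟨fun h => by simpa using h (τ.symm 0), fun h i => h.symm ▸ Fin.zero_le (τ i)⟩
  ext τ
  simp only [IsStandardUpDown, starts_with_min_iff, Set.mem_ofPred_eq, Set.mem_image]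
  constructor
  · rintro ⟨⟨e, rfl⟩, h⟩
    exact ⟨e, isUpDown_zeroConsRev_iff.1 h, rfl⟩
  · rintro ⟨e, he, rfl⟩
    exact ⟨⟨e, rfl⟩, isUpDown_zeroConsRev_iff.2 he⟩

theorem card_isStandardUpDown_perm (m : ℕ) :
    Nat.card {τ : Perm (Fin (m + 1)) // IsStandardUpDown τ} = eulerE m := by
  change Set.ncard {τ : Perm (Fin (m + 1)) | IsStandardUpDown τ} = _
  rw [setOf_isStandardUpDown_perm, Set.ncard_image_of_injective _ zeroConsRev_injective]
  rfl

end StandardUpDownPerm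

section Standardization

variable {α : Type*} [LinearOrder α] {k : ℕ}

theorem card_fin_orderEmbedding (α : Type*) [LinearOrder α] (k : ℕ) :
    Nat.card (Fin k ↪o α) = (Nat.card α).choose k := by
  rw [Nat.card_congr Set.powersetCard.ofFinEmbEquiv, Set.powersetCard.card]

theorem trans_orderEmbedding_bijective :
    Bijective fun p : Perm (Fin k) × (Fin k ↪o α) => p.1.toEmbedding.trans p.2.toEmbedding := by
  constructor
  · rintro ⟨σ, g⟩ ⟨τ, h⟩ hgh
    have comp_eq : g ∘ σ = h ∘ τ := congrArg DFunLike.coe hgh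
    obtain rfl : g = h := by
      rw [← OrderEmbedding.range_inj, ← σ.surjective.range_comp g, comp_eq, τ.surjective.range_comp]
    exact Prod.ext (Equiv.ext fun i => g.injective (congrFun comp_eq i)) rfl
  · intro f
    have mono : StrictMono (f ∘ Tuple.sort f) :=
      (Tuple.monotone_sort f).strictMono_of_injective (f.injective.comp (Tuple.sort f).injective)
    refine ⟨((Tuple.sort f).symm, OrderEmbedding.ofStrictMono _ mono), ?_⟩
    ext i
    simp

/-- A word of `k` distinct letters is determined by its standardization, a permutation of `Fin k`,
and by the increasing enumeration of its letters. -/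
noncomputable def permProdOrderEmbeddingEquiv :
    Perm (Fin k) × (Fin k ↪o α) ≃ (Fin k ↪ α) :=
  Equiv.ofBijective _ trans_orderEmbedding_bijective

theorem card_isStandardUpDown_embedding (α : Type*) [LinearOrder α] (m : ℕ) :
    Nat.card {f : Fin (m + 1) ↪ α // IsStandardUpDown f} =
      eulerE m * (Nat.card α).choose (m + 1) := by
  have standardize (p : Perm (Fin (m + 1)) × (Fin (m + 1) ↪o α)) :
      IsStandardUpDown p.1 ↔ IsStandardUpDown (permProdOrderEmbeddingEquiv p) :=
    (isStandardUpDown_strictMono_comp_iff p.2.strictMono).symm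
  rw [← Nat.card_congr (permProdOrderEmbeddingEquiv.subtypeEquiv standardize),
    Nat.card_congr (prodSubtypeFstEquivSubtypeProd (p := fun τ : Perm (Fin (m + 1)) =>
      IsStandardUpDown τ)),
    Nat.card_prod, card_isStandardUpDown_perm, card_fin_orderEmbedding]

end Standardization

section PrescribedPerm

variable {α ι : Type*} [Finite α]

theorem card_perm_fixing (s : Set α) :
    Nat.card {π : Perm α // ∀ a ∈ s, π a = a} = (Nat.card α - s.ncard).factorial := by
  classical
  have fixing_iff (π : Perm α) : (∀ a, ¬ a ∈ sᶜ → π a = a) ↔ ∀ a ∈ s, π a = a := by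
    simp only [Set.mem_compl_iff, not_not]
  rw [← Nat.card_congr ((Perm.subtypeEquivSubtypePerm (· ∈ sᶜ)).trans
    (Equiv.subtypeEquivRight fixing_iff)), Nat.card_perm, ← Set.ncard_compl]
  rfl

-- The extension of `σ` along `f` is one such `π`; the others differ from it by a permutation
-- fixing the range of `f`.
theorem card_perm_semiconj (f : ι ↪ α) (σ : Perm ι) :
    Nat.card {π : Perm α // Semiconj f σ π} = (Nat.card α - Nat.card ι).factorial := by
  have semiconj_iff (π : Perm α) :
      Semiconj f σ π ↔ ∀ a ∈ Set.range f, ((σ.viaEmbedding f)⁻¹ * π) a = a := by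
    simp only [Set.forall_mem_range, Perm.mul_apply, Perm.inv_eq_iff_eq, Perm.viaEmbedding_apply]
    exact forall_congr' fun i => eq_comm
  rw [Nat.card_congr (subtypeEquiv (q := fun π => ∀ a ∈ Set.range f, π a = a)
      (Equiv.mulLeft (σ.viaEmbedding f)⁻¹) semiconj_iff), card_perm_fixing,
    Set.ncard_range_of_injective f.injective]

end PrescribedPerm

section CycleWords

variable {α β : Type*} {m : ℕ}

theorem finRotate_iterate_zero (m j : ℕ) : (finRotate (m + 1))^[j] 0 = Fin.ofNat (m + 1) j := by
  induction j with
  | zero => rfl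
  | succ j ih =>
    rw [iterate_succ_apply', ih, finRotate_apply]
    ext
    simp [Fin.val_add]

theorem minimalPeriod_finRotate_zero (m : ℕ) : minimalPeriod (finRotate (m + 1)) 0 = m + 1 := by
  have isPeriodicPt_iff (j : ℕ) : IsPeriodicPt (finRotate (m + 1)) j 0 ↔ m + 1 ∣ j := by
    rw [IsPeriodicPt, IsFixedPt, finRotate_iterate_zero, Fin.ext_iff, Nat.dvd_iff_mod_eq_zero]
    rfl
  exact Nat.dvd_right_iff_eq.1 fun j => by
    rw [← isPeriodicPt_iff_minimalPeriod_dvd, isPeriodicPt_iff]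

theorem minimalPeriod_apply_of_semiconj {f : α → β} {ga : α → α} {gb : β → β}
    (h : Semiconj f ga gb) (hf : Injective f) (x : α) :
    minimalPeriod gb (f x) = minimalPeriod ga x :=
  minimalPeriod_eq_minimalPeriod_iff.2 fun j => by
    rw [IsPeriodicPt, IsFixedPt, ← (h.iterate_right j).eq, hf.eq_iff]
    rfl

theorem iterate_apply_zero_of_semiconj_finRotate {f : Fin (m + 1) → α} {g : α → α}
    (h : Semiconj f (finRotate (m + 1)) g) (j : ℕ) :
    g^[j] (f 0) = f (Fin.ofNat (m + 1) j) := by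
  rw [← (h.iterate_right j).eq, finRotate_iterate_zero]

theorem apply_eq_iterate_of_semiconj_finRotate {f : Fin (m + 1) → α} {g : α → α}
    (h : Semiconj f (finRotate (m + 1)) g) (i : Fin (m + 1)) : f i = g^[i] (f 0) := by
  rw [iterate_apply_zero_of_semiconj_finRotate h, Fin.ofNat_val_eq_self]

theorem semiconj_finRotate_iterate {g : α → α} {x : α} (hx : minimalPeriod g x = m + 1) :
    Semiconj (fun i : Fin (m + 1) => g^[i] x) (finRotate (m + 1)) g := fun i => by
  have val_rotate : (finRotate (m + 1) i : ℕ) = (i + 1) % minimalPeriod g x := by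
    rw [hx, finRotate_apply]
    simp [Fin.val_add]
  change g^[finRotate (m + 1) i] x = g (g^[i] x)
  rw [val_rotate, iterate_mod_minimalPeriod_eq, iterate_succ_apply']

/-- A cycle of length `m + 1` of `g` with a marked starting point `x` is the same as its word
`x, g x, …`, an embedding of `Fin (m + 1)` which turns the rotation of `Fin (m + 1)` into `g`. -/
def cycleWordEquiv (g : α → α) (m : ℕ) :
    {f : Fin (m + 1) ↪ α // Semiconj f (finRotate (m + 1)) g} ≃
      {x : α // minimalPeriod g x = m + 1} where
  toFun f := ⟨f.1 0, by
    rw [minimalPeriod_apply_of_semiconj f.2 f.1.injective, minimalPeriod_finRotate_zero]⟩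
  invFun x :=
    ⟨⟨fun i => g^[i] x, fun i j hij => Fin.ext <|
      iterate_injOn_Iio_minimalPeriod (i.2.trans_eq x.2.symm) (j.2.trans_eq x.2.symm) hij⟩,
    semiconj_finRotate_iterate x.2⟩
  left_inv f := Subtype.ext <| Embedding.ext fun i =>
    (apply_eq_iterate_of_semiconj_finRotate f.2 i).symm
  right_inv _ := rfl

end CycleWords

section UpDownCycles

variable {n m : ℕ} {π : Perm (Fin n)}

theorem isOrbitMin_apply_zero_iff {f : Fin (m + 1) → Fin n}
    (h : Semiconj f (finRotate (m + 1)) π) : IsOrbitMin π (f 0) ↔ ∀ i, f 0 ≤ f i := by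
  simp only [IsOrbitMin, Perm.coe_pow]
  constructor
  · intro hmin i
    rw [apply_eq_iterate_of_semiconj_finRotate h i]
    exact hmin i
  · intro hmin j
    rw [iterate_apply_zero_of_semiconj_finRotate h]
    exact hmin _

theorem cycleUpDownAt_apply_zero_iff {f : Fin (m + 1) ↪ Fin n}
    (h : Semiconj f (finRotate (m + 1)) π) : CycleUpDownAt π (f 0) ↔ IsUpDown f := by
  have cycLen_eq : cycLen π (f 0) = m + 1 := (cycleWordEquiv π m ⟨f, h⟩).2
  simp only [CycleUpDownAt, cycLen_eq, Perm.coe_pow]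
  constructor
  · intro hud i j hij
    rw [apply_eq_iterate_of_semiconj_finRotate h i, apply_eq_iterate_of_semiconj_finRotate h j, hij]
    exact hud i (hij ▸ j.2)
  · intro hud i hi
    have pattern_at := hud ⟨i, by omega⟩ ⟨i + 1, hi⟩ rfl
    rwa [apply_eq_iterate_of_semiconj_finRotate h ⟨i, _⟩,
      apply_eq_iterate_of_semiconj_finRotate h ⟨i + 1, _⟩] at pattern_at

theorem udLenCount_succ_eq_card_embedding (π : Perm (Fin n)) (m : ℕ) :
    udLenCount π (m + 1) = Nat.card {f : Fin (m + 1) ↪ Fin n //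
      Semiconj f (finRotate (m + 1)) π ∧ IsStandardUpDown f} := by
  have isStandardUpDown_iff (f : {f : Fin (m + 1) ↪ Fin n // Semiconj f (finRotate (m + 1)) π}) :
      IsStandardUpDown f.1 ↔ IsOrbitMin π (f.1 0) ∧ CycleUpDownAt π (f.1 0) :=
    and_congr (isOrbitMin_apply_zero_iff f.2).symm (cycleUpDownAt_apply_zero_iff f.2).symm
  calc
    _ = Nat.card {x : Fin n // cycLen π x = m + 1 ∧ IsOrbitMin π x ∧ CycleUpDownAt π x} :=
      Nat.card_congr (Equiv.subtypeEquivRight fun _ => and_left_comm)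
    _ = Nat.card {x : {x : Fin n // cycLen π x = m + 1} //
          IsOrbitMin π x.1 ∧ CycleUpDownAt π x.1} :=
      Nat.card_congr (subtypeSubtypeEquivSubtypeInter _ fun x =>
        IsOrbitMin π x ∧ CycleUpDownAt π x).symm
    _ = Nat.card {f : {f : Fin (m + 1) ↪ Fin n // Semiconj f (finRotate (m + 1)) π} //
          IsStandardUpDown f.1} :=
      (Nat.card_congr ((cycleWordEquiv π m).subtypeEquiv isStandardUpDown_iff)).symm
    _ = _ := Nat.card_congr (subtypeSubtypeEquivSubtypeInter _ fun f : Fin (m + 1) ↪ Fin n =>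
      IsStandardUpDown f)

theorem sum_udLenCount_succ (n m : ℕ) :
    ∑ π : Perm (Fin n), udLenCount π (m + 1) =
      eulerE m * n.choose (m + 1) * (n - (m + 1)).factorial := by
  classical
  let words : Finset (Fin (m + 1) ↪ Fin n) := {f | IsStandardUpDown f}
  let isCycle (π : Perm (Fin n)) (f : Fin (m + 1) ↪ Fin n) : Prop :=
    Semiconj f (finRotate (m + 1)) π
  have card_words : #words = eulerE m * n.choose (m + 1) := by
    rw [← Nat.subtype_card (p := fun f : Fin (m + 1) ↪ Fin n => IsStandardUpDown f) words
      (by simp [words]), card_isStandardUpDown_embedding, Nat.card_fin]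
  calc
    _ = ∑ π : Perm (Fin n), #(words.bipartiteAbove isCycle π) :=
      sum_congr rfl fun π _ => (udLenCount_succ_eq_card_embedding π m).trans
        (Nat.subtype_card _ fun f => by simp [words, isCycle, and_comm])
    _ = ∑ f ∈ words, #((univ : Finset (Perm (Fin n))).bipartiteBelow isCycle f) :=
      sum_card_bipartiteAbove_eq_sum_card_bipartiteBelow isCycle
    _ = ∑ f ∈ words, (n - (m + 1)).factorial := sum_congr rfl fun f _ => by
      rw [← Nat.subtype_card (p := (isCycle · f)) _ (by simp), card_perm_semiconj]
      simp only [Nat.card_fin]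
    _ = _ := by rw [sum_const, smul_eq_mul, card_words]

theorem sum_udLenCount_eq_factorial_mul {k : ℕ} (hk : k ∈ Icc 1 n) :
    ∑ π : Perm (Fin n), (udLenCount π k : ℚ) =
      n.factorial * ((eulerE (k - 1) : ℚ) / k.factorial) := by
  obtain ⟨hk_pos, hkn⟩ := mem_Icc.1 hk
  obtain ⟨m, rfl⟩ := Nat.exists_eq_succ_of_ne_zero (Nat.one_le_iff_ne_zero.1 hk_pos)
  have factorial_ne_zero : ((m + 1).factorial : ℚ) ≠ 0 := mod_cast Nat.factorial_ne_zero _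
  rw [← Nat.cast_sum, sum_udLenCount_succ, ← Nat.choose_mul_factorial_mul_factorial hkn,
    Nat.succ_sub_one]
  push_cast
  field_simp

theorem cycLen_mem_Icc (π : Perm (Fin n)) (x : Fin n) : cycLen π x ∈ Icc 1 n :=
  mem_Icc.2 ⟨minimalPeriod_pos_of_mem_periodicPts (π.injective.mem_periodicPts x),
    minimalPeriod_le_card.trans_eq (Fintype.card_fin n)⟩

theorem udCount_eq_sum_udLenCount (π : Perm (Fin n)) :
    udCount π = ∑ k ∈ Icc 1 n, udLenCount π k := by
  classical
  simp only [udCount, udLenCount, Nat.card_eq_fintype_card, Fintype.card_subtype]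
  rw [card_eq_sum_card_fiberwise fun x _ => cycLen_mem_Icc π x]
  simp only [filter_filter, and_assoc, and_comm (a := CycleUpDownAt π _)]

end UpDownCycles

/-- the total number of up-down cycles over all permutations of `[n]`
equals `n! · (E 0 / 1! + E 1 / 2! + ⋯ + E (n-1) / n!)`. -/
theorem stmt18 (n : ℕ) (hn : 1 ≤ n) :
    (∑ π : Equiv.Perm (Fin n), (udCount π : ℚ)) =
      (Nat.factorial n : ℚ) *
        ∑ k ∈ Finset.Icc 1 n, (eulerE (k - 1) : ℚ) / (Nat.factorial k : ℚ) := by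
  simp only [udCount_eq_sum_udLenCount, Nat.cast_sum]
  rw [sum_comm, mul_sum]
  exact sum_congr rfl fun k hk => sum_udLenCount_eq_factorial_mul hk
end
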